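/- Let 0 < α < 1 and let f_𝔾 be the function on (0,1) given by f_𝔾(u) = (α·sin(πα)/((1−α)π))·u^{α−1}(1−u)^{α−1}/(u^{2α} − 2u^α(1−u)^α cos(πα) + (1−u)^{2α}). Then f_𝔾 is a probability density on (0,1), and for every λ ≥ 0, exp(−(1−α)·∫₀¹ log(1 + λ/u)·f_𝔾(u) du) = (1+λ)^α − λ^α. (The Laplace exponent identity for the BFRY subordinator: Σ_α is GGC(1−α, F_{1/𝔾_α}) with E[e^{−λΣ_α}] = (1+λ)^α − λ^α.) -/

import Mathlib

open MeasureTheory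

/-- The density of the BFRY random variable `𝔾_α` on (0,1). -/
noncomputable def bfryDensity (α : ℝ) : ℝ → ℝ := fun u =>
  α * Real.sin (Real.pi * α) / ((1 - α) * Real.pi) *
    (u ^ (α - 1) * (1 - u) ^ (α - 1) /
      (u ^ (2 * α) - 2 * u ^ α * (1 - u) ^ α * Real.cos (Real.pi * α) + (1 - u) ^ (2 * α)))


open Filter Topology Complex in
lemma bf_strip (G : ℂ → ℂ) (k : ℝ → ℝ) (L M : ℂ) (c : ℝ)
    (hG : DifferentiableOn ℂ G {w | |w.im| < 2 * Real.pi})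
    (hk : ∀ t, 0 ≤ k t) (hkc : Continuous k)
    (hd : ∀ t : ℝ, G (t + Real.pi * I) - G (t + (-Real.pi : ℝ) * I) = I * k t)
    (hL : Tendsto G (comap re atTop) (𝓝 L)) (hM : Tendsto G (comap re atBot) (𝓝 M))
    (hc : 2 * Real.pi * (L - M) = c) :
    Integrable k ∧ ∫ t, k t = c := by
  have hpi := Real.pi_pos
  have hsub : ∀ R : ℝ, (Set.uIcc (-R) R ×ℂ Set.uIcc (-Real.pi) Real.pi) ⊆ {w : ℂ | |w.im| < 2 * Real.pi} := by
    intro R w hw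
    have h2 := hw.2
    rw [Set.uIcc_of_le (by linarith)] at h2
    simp only [Set.mem_preimage, Set.mem_Icc] at h2
    have : |w.im| ≤ Real.pi := abs_le.2 h2
    change |w.im| < _; linarith
  have hGc : ContinuousOn G {w | |w.im| < 2 * Real.pi} := hG.continuousOn
  have hci : ∀ y : ℝ, |y| < 2 * Real.pi → Continuous fun x : ℝ => G (x + y * I) := by
    intro y hy
    refine hGc.comp_continuous (by fun_prop) ?_
    intro x; simpa using hy
  have hcv : ∀ x : ℝ, ContinuousOn (fun y : ℝ => G (x + y * I)) (Set.uIcc (-Real.pi) Real.pi) := by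
    intro x
    refine hGc.comp (by fun_prop) ?_
    intro y hy
    rw [Set.uIcc_of_le (by linarith)] at hy
    have : |y| ≤ Real.pi := abs_le.2 hy
    simp; linarith
  have hlim : ∀ (l : Filter ℝ) (A : ℂ), Tendsto G (comap re l) (𝓝 A) →
      Tendsto (fun R : ℝ => ∫ y in (-Real.pi)..Real.pi, G (R + y * I)) l (𝓝 (2 * Real.pi * A)) := by
    intro l A hA
    rw [Metric.tendsto_nhds] at hA ⊢
    intro ε hε
    have h1 := hA (ε / (4 * Real.pi)) (by positivity)
    rw [eventually_comap] at h1
    filter_upwards [h1] with R hR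
    rw [dist_eq_norm]
    have : (2 * Real.pi * A) = ∫ y in (-Real.pi)..Real.pi, A := by
      simp; left; ring
    rw [this, ← intervalIntegral.integral_sub (hcv R).intervalIntegrable (by simp)]
    calc _ ≤ (ε / (4 * Real.pi)) * |Real.pi - (-Real.pi)| := by
          apply intervalIntegral.norm_integral_le_of_norm_le_const
          intro y hy
          rw [← dist_eq_norm]
          exact (hR (R + y * I) (by simp)).le
      _ < ε := by
          rw [abs_of_pos (by linarith)]; field_simp; linarith
  have hrect : ∀ R : ℝ, ((∫ t in (-R)..R, k t : ℝ) : ℂ) =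
      (∫ y in (-Real.pi)..Real.pi, G (R + y * I)) - ∫ y in (-Real.pi)..Real.pi, G ((-R : ℝ) + y * I) := by
    intro R
    have h := integral_boundary_rect_eq_zero_of_differentiableOn G ⟨-R, -Real.pi⟩ ⟨R, Real.pi⟩
      (hG.mono (hsub R))
    simp only [smul_eq_mul] at h
    have h2 : (∫ x : ℝ in (-R)..R, G (x + Real.pi * I)) - (∫ x : ℝ in (-R)..R, G (x + (-Real.pi : ℝ) * I))
        = I * ((∫ t in (-R)..R, k t : ℝ) : ℂ) := by
      rw [← intervalIntegral.integral_sub, ← intervalIntegral.integral_ofReal,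
        ← intervalIntegral.integral_const_mul]
      · congr 1; ext t; exact hd t
      · exact (hci _ (by rw [abs_of_pos hpi]; linarith)).intervalIntegrable _ _
      · exact (hci _ (by rw [abs_neg, abs_of_pos hpi]; linarith)).intervalIntegrable _ _
    have h3 : I * ((∫ t in (-R)..R, k t : ℝ) : ℂ) = I * ((∫ y in (-Real.pi)..Real.pi, G (R + y * I)) - ∫ y in (-Real.pi)..Real.pi, G ((-R : ℝ) + y * I)) := by
      rw [← h2]; linear_combination -h
    exact mul_left_cancel₀ I_ne_zero h3
  have hT : Tendsto (fun R : ℝ => ∫ t in (-R)..R, k t) atTop (𝓝 c) := by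
    have : Tendsto (fun R : ℝ => ((∫ t in (-R)..R, k t : ℝ) : ℂ)) atTop (𝓝 (c : ℂ)) := by
      simp_rw [hrect]
      rw [← hc, mul_sub]
      exact (hlim _ _ hL).sub ((hlim _ _ hM).comp tendsto_neg_atTop_atBot)
    have h2 := (continuous_re.tendsto _).comp this
    simpa [Function.comp_def] using h2
  have hI : Integrable k := by
    refine integrable_of_intervalIntegral_norm_tendsto (l := atTop) (a := fun R : ℝ => -R) (b := fun R => R) c ?_ tendsto_neg_atTop_atBot tendsto_id ?_
    · intro R
      exact hkc.integrableOn_Ioc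
    · simpa [Real.norm_of_nonneg (hk _)] using hT
  refine ⟨hI, ?_⟩
  exact tendsto_nhds_unique (intervalIntegral_tendsto_integral hI tendsto_neg_atTop_atBot tendsto_id) hT

section
open Complex
/-- (e^w-1)/w -/
noncomputable def bfq (w : ℂ) : ℂ := dslope exp 0 w

noncomputable def bfp (α : ℝ) (w : ℂ) : ℂ := exp w / bfq w - exp (α * w) / bfq (α * w)

noncomputable def bfg (α : ℝ) : ℂ → ℂ := dslope (bfp α) 0

lemma bf_exp_ne {w w0 : ℂ} (h : w ≠ w0) (hi : |(w - w0).im| < 2 * Real.pi) : exp w - exp w0 ≠ 0 := by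
  intro h0
  rw [sub_eq_zero, exp_eq_exp_iff_exists_int] at h0
  obtain ⟨n, hn⟩ := h0
  have h1 : w - w0 = n * (2 * Real.pi * I) := by rw [hn]; ring
  rw [h1] at hi
  have hpi := Real.pi_pos
  have h2 : ((n : ℂ) * (2 * Real.pi * I)).im = n * (2 * Real.pi) := by simp
  rw [h2, abs_mul, abs_of_pos (by positivity : 0 < 2 * Real.pi)] at hi
  have h3 : |(n : ℝ)| < 1 := by
    by_contra hh
    push Not at hh
    nlinarith
  have h4 : n = 0 := by
    rw [← Int.cast_abs] at h3
    exact Int.abs_lt_one_iff.1 (by exact_mod_cast h3)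
  apply h; rw [hn, h4]; simp

lemma bf_ds_ne {w w0 : ℂ} (hi : |(w - w0).im| < 2 * Real.pi) : dslope exp w0 w ≠ 0 := by
  by_cases h : w = w0
  · subst h; rw [dslope_same]; simp [exp_ne_zero]
  · rw [dslope_of_ne _ h, slope_def_field]
    exact div_ne_zero (bf_exp_ne h hi) (sub_ne_zero.2 h)

lemma bf_ds_diff (w0 : ℂ) : Differentiable ℂ (dslope exp w0) := by
  rw [← differentiableOn_univ, differentiableOn_dslope Filter.univ_mem]
  exact differentiable_exp.differentiableOn

lemma bf_open : IsOpen {w : ℂ | |w.im| < 2 * Real.pi} :=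
  isOpen_lt (by fun_prop) continuous_const

lemma bfg_diff (α : ℝ) (h0 : 0 < α) (h1 : α < 1) :
    DifferentiableOn ℂ (bfg α) {w | |w.im| < 2 * Real.pi} := by
  unfold bfg
  rw [differentiableOn_dslope (bf_open.mem_nhds (by simp [Real.pi_pos]))]
  unfold bfp bfq
  have hd := bf_ds_diff 0
  refine DifferentiableOn.sub (DifferentiableOn.div (by fun_prop) (by fun_prop) ?_)
    (DifferentiableOn.div (by fun_prop) ?_ ?_)
  · intro w hw; exact bf_ds_ne (by simpa using hw)
  · exact (hd.comp (by fun_prop : Differentiable ℂ fun w : ℂ => (α : ℂ) * w)).differentiableOn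
  · intro w hw; apply bf_ds_ne
    change |w.im| < _ at hw
    simp only [sub_zero, im_ofReal_mul, abs_mul, abs_of_pos h0]
    have := abs_nonneg w.im
    nlinarith

lemma bfg_eq (α : ℝ) (h0 : 0 < α) (h1 : α < 1) (w : ℂ) (hw : w ≠ 0) :
    bfg α w = exp w / (exp w - 1) - α * exp (α * w) / (exp (α * w) - 1) := by
  have ha : (α : ℂ) ≠ 0 := by exact_mod_cast h0.ne'
  have haw := mul_ne_zero ha hw
  unfold bfg
  rw [dslope_of_ne _ hw, slope_def_field]
  unfold bfp bfq
  rw [dslope_of_ne _ hw, dslope_of_ne _ haw, slope_def_field, slope_def_field]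
  simp only [mul_zero, dslope_same, sub_self, sub_zero, exp_zero]
  rw [div_div_eq_mul_div, div_div_eq_mul_div]
  field_simp

open Filter Topology
lemma bf_e_bot (a : ℝ) (h : 0 < a) : Tendsto (fun w : ℂ => exp (a * w)) (comap re atBot) (𝓝 0) := by
  refine tendsto_exp_comap_re_atBot.comp ?_
  rw [tendsto_comap_iff]
  have : (re ∘ fun w : ℂ => (a:ℂ) * w) = (fun x : ℝ => a * x) ∘ re := by ext; simp
  rw [this]
  exact (tendsto_id.const_mul_atBot h).comp tendsto_comap

lemma bf_e_top (a : ℝ) (h : 0 < a) : Tendsto (fun w : ℂ => (exp (a * w))⁻¹) (comap re atTop) (𝓝 0) := by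
  refine tendsto_inv₀_cobounded.comp (tendsto_exp_comap_re_atTop.comp ?_)
  rw [tendsto_comap_iff]
  have : (re ∘ fun w : ℂ => (a:ℂ) * w) = (fun x : ℝ => a * x) ∘ re := by ext; simp
  rw [this]
  exact (tendsto_id.const_mul_atTop h).comp tendsto_comap

lemma bfg_bot (α : ℝ) (h0 : 0 < α) (h1 : α < 1) : Tendsto (bfg α) (comap re atBot) (𝓝 0) := by
  have hA := bf_e_bot 1 one_pos
  have hB := bf_e_bot α h0
  have : Tendsto (fun w : ℂ => exp (((1:ℝ):ℂ) * w) / (exp (((1:ℝ):ℂ) * w) - 1) - α * exp (α * w) / (exp (α * w) - 1)) (comap re atBot) (𝓝 (0 / (0 - 1) - α * 0 / (0 - 1))) :=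
    (hA.div (hA.sub_const 1) (by simp)).sub ((hB.const_mul _).div (hB.sub_const 1) (by simp))
  simp only [zero_div, mul_zero, sub_zero] at this
  refine this.congr' ?_
  filter_upwards [preimage_mem_comap (Iio_mem_atBot (0:ℝ))] with w hw
  rw [bfg_eq α h0 h1]
  · simp
  · rintro rfl; simp at hw

lemma bfg_top (α : ℝ) (h0 : 0 < α) (h1 : α < 1) : Tendsto (bfg α) (comap re atTop) (𝓝 (1 - α)) := by
  have hA := bf_e_top 1 one_pos
  have hB := bf_e_top α h0
  have : Tendsto (fun w : ℂ => 1 / (1 - (exp (((1:ℝ):ℂ) * w))⁻¹) - α / (1 - (exp (α * w))⁻¹)) (comap re atTop) (𝓝 (1 / (1 - 0) - α / (1 - 0))) :=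
    (tendsto_const_nhds.div (hA.const_sub 1) (by simp)).sub (tendsto_const_nhds.div (hB.const_sub 1) (by simp))
  simp only [sub_zero, div_one] at this
  refine this.congr' ?_
  filter_upwards [preimage_mem_comap (Ioi_mem_atTop (0:ℝ))] with w hw
  have key : ∀ z : ℂ, z ≠ 0 → 1 - z⁻¹ = (z - 1) / z := by intro z hz; field_simp
  rw [bfg_eq α h0 h1, key _ (exp_ne_zero _), key _ (exp_ne_zero _), div_div_eq_mul_div, div_div_eq_mul_div]
  · simp
  · rintro rfl; simp at hw

/-- density in the logit variable, times π(1-α) -/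
noncomputable def bfr (α : ℝ) (t : ℝ) : ℝ :=
  α * Real.sin (Real.pi * α) * Real.exp (α * t) /
    (Real.exp (α * t) ^ 2 - 2 * Real.exp (α * t) * Real.cos (Real.pi * α) + 1)

lemma bf_sin (α : ℝ) (h0 : 0 < α) (h1 : α < 1) : 0 < Real.sin (Real.pi * α) :=
  Real.sin_pos_of_pos_of_lt_pi (by have := Real.pi_pos; positivity) (by have := Real.pi_pos; nlinarith)

lemma bf_den (α : ℝ) (h0 : 0 < α) (h1 : α < 1) (y z : ℝ) (hz : 0 < z) :
    0 < y ^ 2 - 2 * y * z * Real.cos (Real.pi * α) + z ^ 2 := by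
  have hs := bf_sin α h0 h1
  have h2 := Real.sin_sq_add_cos_sq (Real.pi * α)
  have : y ^ 2 - 2 * y * z * Real.cos (Real.pi * α) + z ^ 2 =
    (y - z * Real.cos (Real.pi * α)) ^ 2 + (z * Real.sin (Real.pi * α)) ^ 2 := by
    linear_combination (-z ^ 2) * h2
  rw [this]; positivity

lemma bf_den1 (α : ℝ) (h0 : 0 < α) (h1 : α < 1) (y : ℝ) :
    0 < y ^ 2 - 2 * y * Real.cos (Real.pi * α) + 1 := by
  simpa using bf_den α h0 h1 y 1 one_pos

lemma bfr_pos (α : ℝ) (h0 : 0 < α) (h1 : α < 1) (t : ℝ) : 0 < bfr α t := by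
  have hs := bf_sin α h0 h1
  exact div_pos (by positivity) (bf_den1 α h0 h1 _)

lemma bfr_cont (α : ℝ) (h0 : 0 < α) (h1 : α < 1) : Continuous (bfr α) := by
  unfold bfr
  refine Continuous.div (by fun_prop) (by fun_prop) (fun t => (bf_den1 α h0 h1 _).ne')

lemma bf_exp_pi (t : ℝ) : exp (t + Real.pi * I) = -exp t := by rw [exp_add, exp_pi_mul_I]; ring
lemma bf_exp_pi' (t : ℝ) : exp (t + (-Real.pi : ℝ) * I) = -exp t := by
  rw [exp_add]; push_cast; rw [neg_mul, exp_neg, exp_pi_mul_I]; norm_num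

lemma bfg_jump (α : ℝ) (h0 : 0 < α) (h1 : α < 1) (t : ℝ) :
    bfg α (t + Real.pi * I) - bfg α (t + (-Real.pi : ℝ) * I) = I * (2 * bfr α t : ℝ) := by
  have hpi := Real.pi_pos
  have n1 : (t + Real.pi * I : ℂ) ≠ 0 := by
    intro h; have := congrArg im h; simp at this
  have n2 : (t + (-Real.pi : ℝ) * I : ℂ) ≠ 0 := by
    intro h; have := congrArg im h; simp at this
  rw [bfg_eq α h0 h1 _ n1, bfg_eq α h0 h1 _ n2, bf_exp_pi, bf_exp_pi']
  have e1 : exp (α * (t + Real.pi * I)) = Real.exp (α * t) * (Real.cos (Real.pi * α) + Real.sin (Real.pi * α) * I) := by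
    push_cast; rw [← exp_mul_I, ← exp_add]; congr 1; ring
  have e2 : exp (α * (t + (-Real.pi : ℝ) * I)) = Real.exp (α * t) * (Real.cos (Real.pi * α) - Real.sin (Real.pi * α) * I) := by
    have : (Real.cos (Real.pi * α) - Real.sin (Real.pi * α) * I : ℂ) = exp (-(Real.pi * α) * I) := by
      rw [exp_mul_I]; push_cast; simp; ring
    rw [this]; push_cast; rw [← exp_add]; congr 1; ring
  rw [e1, e2]
  unfold bfr
  have hden := bf_den1 α h0 h1 (Real.exp (α * t))
  have hs := bf_sin α h0 h1
  have h2 := Real.sin_sq_add_cos_sq (Real.pi * α)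
  have hy := Real.exp_pos (α * t)
  generalize Real.exp (α * t) = y at *
  generalize Real.sin (Real.pi * α) = s at *
  generalize Real.cos (Real.pi * α) = c at *
  have d1 : (y * (c + s * I) - 1 : ℂ) ≠ 0 := by
    intro h; have := congrArg im h; simp at this; rcases this with h | h <;> linarith
  have d2 : (y * (c - s * I) - 1 : ℂ) ≠ 0 := by
    intro h; have := congrArg im h; simp at this; rcases this with h | h <;> linarith
  have hden' : (y ^ 2 - 2 * y * c + 1 : ℂ) ≠ 0 := by exact_mod_cast hden.ne'
  have h2' : (s ^ 2 + c ^ 2 : ℂ) = 1 := by exact_mod_cast h2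
  have hprod : (y ^ 2 - 2 * y * c + 1 : ℂ) = (y * (c + s * I) - 1) * (y * (c - s * I) - 1) := by
    linear_combination (-y ^ 2 : ℂ) * h2' + (y ^ 2 * s ^ 2 : ℂ) * I_sq
  push_cast
  rw [hprod]
  field_simp
  ring

lemma bfr_int (α : ℝ) (h0 : 0 < α) (h1 : α < 1) :
    Integrable (bfr α) ∧ ∫ t, bfr α t = Real.pi * (1 - α) := by
  have := bf_strip (bfg α) (fun t => 2 * bfr α t) (1 - α) 0 (2 * Real.pi * (1 - α)) (bfg_diff α h0 h1)
    (fun t => by have := bfr_pos α h0 h1 t; positivity) (by have := bfr_cont α h0 h1; fun_prop)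
    (bfg_jump α h0 h1) (bfg_top α h0 h1) (bfg_bot α h0 h1) (by push_cast; ring)
  obtain ⟨hi, he⟩ := this
  refine ⟨by simpa using hi.const_mul (1/2), ?_⟩
  rw [integral_const_mul] at he
  linarith

lemma bfr_int2 (α : ℝ) (h0 : 0 < α) (h1 : α < 1) (w0 : ℝ) (hw0 : w0 ≠ 0) :
    Integrable (fun t => bfr α t / (Real.exp t + Real.exp w0)) ∧
    ∫ t, bfr α t / (Real.exp t + Real.exp w0) = Real.pi * ((Real.exp w0 / (Real.exp w0 - 1) - α * Real.exp (α * w0) / (Real.exp (α * w0) - 1)) / Real.exp w0) := by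
  have hg : bfg α w0 = ((Real.exp w0 / (Real.exp w0 - 1) - α * Real.exp (α * w0) / (Real.exp (α * w0) - 1) : ℝ) : ℂ) := by
    rw [bfg_eq α h0 h1 _ (by exact_mod_cast hw0)]; push_cast; rfl
  set g0 := (Real.exp w0 / (Real.exp w0 - 1) - α * Real.exp (α * w0) / (Real.exp (α * w0) - 1) : ℝ)
  have hd := bf_ds_diff w0
  have hgd := bfg_diff α h0 h1
  have hval : ∀ w : ℂ, w ≠ w0 → dslope (fun w => -bfg α w) w0 w / dslope exp w0 w = (g0 - bfg α w) / (exp w - exp w0) := by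
    intro w hw
    rw [dslope_of_ne _ hw, dslope_of_ne _ hw, slope_def_field, slope_def_field, div_div_div_cancel_right₀ (sub_ne_zero.2 hw), hg]
    ring
  have hbt : Tendsto (fun w : ℂ => (g0 - bfg α w) / (exp w - exp w0)) (comap re atBot) (𝓝 (-g0 / exp w0)) := by
    have := ((bfg_bot α h0 h1).const_sub (g0 : ℂ)).div ((tendsto_exp_comap_re_atBot).sub_const (exp w0)) (by simp)
    simp only [sub_zero, zero_sub, div_neg] at this
    rw [neg_div]; exact this
  have htp : Tendsto (fun w : ℂ => (g0 - bfg α w) / (exp w - exp w0)) (comap re atTop) (𝓝 0) := by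
    have hc : Tendsto (fun w : ℂ => exp w - exp w0) (comap re atTop) (Bornology.cobounded ℂ) := by
      have := tendsto_exp_comap_re_atTop
      rw [← tendsto_norm_atTop_iff_cobounded] at this ⊢
      refine tendsto_atTop_mono (fun w => norm_sub_norm_le _ _) ?_
      exact tendsto_atTop_add_const_right _ _ this
    have := ((bfg_top α h0 h1).const_sub (g0 : ℂ)).mul (tendsto_inv₀_cobounded.comp hc)
    simpa [div_eq_mul_inv, Function.comp_def] using this
  have := bf_strip (fun w => dslope (fun w => -bfg α w) w0 w / dslope exp w0 w) (fun t => 2 * (bfr α t / (Real.exp t + Real.exp w0))) 0 (-g0 / exp w0) (2 * Real.pi * (g0 / Real.exp w0)) ?_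
    (fun t => by have := bfr_pos α h0 h1 t; positivity) ?_
    ?_ ?_ ?_ (by push_cast; ring)
  · obtain ⟨hi, he⟩ := this
    refine ⟨by simpa using hi.const_mul (1/2), ?_⟩
    rw [integral_const_mul] at he
    linarith
  · refine DifferentiableOn.div ?_ hd.differentiableOn ?_
    · rw [differentiableOn_dslope (bf_open.mem_nhds (by simp [Real.pi_pos]))]
      exact hgd.neg
    · intro w hw; exact bf_ds_ne (by simpa using hw)
  · have := bfr_cont α h0 h1
    refine continuous_const.mul (this.div (by fun_prop) (fun t => by positivity))
  · intro t
    have hpi := Real.pi_pos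
    have n1 : (t + Real.pi * I : ℂ) ≠ w0 := by
      intro h; have := congrArg im h; simp at this
    have n2 : (t + (-Real.pi : ℝ) * I : ℂ) ≠ w0 := by
      intro h; have := congrArg im h; simp at this
    have hj := bfg_jump α h0 h1 t
    simp only [hval _ n1, hval _ n2, bf_exp_pi, bf_exp_pi']
    have : (Real.exp t + Real.exp w0 : ℂ) ≠ 0 := by
      have : Real.exp t + Real.exp w0 ≠ 0 := by positivity
      exact_mod_cast this
    push_cast at this hj ⊢
    have h' : (-exp t - exp w0 : ℂ) = -(exp t + exp w0) := by ring
    rw [h']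
    generalize bfg α (t + Real.pi * I) = A at *
    generalize bfg α (t + -Real.pi * I) = B at *
    field_simp
    linear_combination hj
  · refine htp.congr' ?_
    filter_upwards [preimage_mem_comap (Ioi_mem_atTop w0)] with w hw
    rw [hval w]; rintro rfl; simp at hw
  · refine hbt.congr' ?_
    filter_upwards [preimage_mem_comap (Iio_mem_atBot w0)] with w hw
    rw [hval w]; rintro rfl; simp at hw
end

noncomputable def bfs (t : ℝ) : ℝ := Real.exp t / (1 + Real.exp t)

lemma bfs_pos (t : ℝ) : 0 < bfs t := by unfold bfs; positivity

lemma bfs_deriv (t : ℝ) : HasDerivAt bfs (Real.exp t / (1 + Real.exp t) ^ 2) t := by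
  have h := (Real.hasDerivAt_exp t).div ((Real.hasDerivAt_exp t).const_add 1) (by positivity)
  refine h.congr_deriv ?_
  congr 1; ring

lemma bfs_cont : Continuous bfs :=
  continuous_iff_continuousAt.2 fun t => (bfs_deriv t).continuousAt

lemma bfs_inj : Function.Injective bfs := by
  intro a b h
  unfold bfs at h
  rw [div_eq_div_iff (by positivity) (by positivity)] at h
  exact Real.exp_injective (by linarith)

lemma bfs_image : bfs '' Set.univ = Set.Ioo 0 1 := by
  ext u
  simp only [Set.image_univ, Set.mem_range, Set.mem_Ioo]
  constructor
  · rintro ⟨t, rfl⟩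
    refine ⟨bfs_pos t, ?_⟩
    unfold bfs; rw [div_lt_one (by positivity)]; linarith
  · rintro ⟨h0, h1⟩
    refine ⟨Real.log (u / (1 - u)), ?_⟩
    have h2 : 0 < 1 - u := by linarith
    unfold bfs
    rw [Real.exp_log (by positivity)]
    field_simp
    ring

lemma bf_dens (α : ℝ) (h0 : 0 < α) (h1 : α < 1) (t : ℝ) :
    (Real.exp t / (1 + Real.exp t) ^ 2) * bfryDensity α (bfs t) = (1 / ((1 - α) * Real.pi)) * bfr α t := by
  have hp : 0 < 1 + Real.exp t := by positivity
  have hx := Real.exp_pos t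
  have e1 : 1 - bfs t = 1 / (1 + Real.exp t) := by unfold bfs; field_simp; ring
  have hxa : Real.exp (α * t) = Real.exp t ^ α := by rw [← Real.exp_mul, mul_comm]
  unfold bfryDensity bfr
  simp only [e1]
  unfold bfs
  rw [hxa]
  generalize Real.exp t = x at *
  rw [Real.div_rpow hx.le hp.le, Real.div_rpow hx.le hp.le, Real.div_rpow hx.le hp.le,
    Real.div_rpow zero_le_one hp.le, Real.div_rpow zero_le_one hp.le, Real.div_rpow zero_le_one hp.le]
  simp only [Real.one_rpow, Real.rpow_sub_one hx.ne', Real.rpow_sub_one hp.ne']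
  have f1 : ∀ y : ℝ, 0 < y → y ^ (2 * α) = (y ^ α) ^ 2 := by
    intro y hy; rw [mul_comm, Real.rpow_mul hy.le]; norm_cast
  rw [f1 x hx, f1 _ hp]
  have hX : 0 < x ^ α := by positivity
  have hP : 0 < (1 + x) ^ α := by positivity
  have hd := bf_den1 α h0 h1 (x ^ α)
  have h1a : 0 < 1 - α := by linarith
  have hpi := Real.pi_pos
  generalize x ^ α = X at *
  generalize (1 + x) ^ α = P at *
  generalize Real.cos (Real.pi * α) = c at *
  have hden : X ^ 2 / P ^ 2 - 2 * (X / P) * (1 / P) * c + 1 / P ^ 2 = (X ^ 2 - 2 * X * c + 1) / P ^ 2 := by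
    field_simp
  rw [hden]
  generalize X ^ 2 - 2 * X * c + 1 = Q at *
  field_simp

lemma bf_cov (α : ℝ) (h0 : 0 < α) (h1 : α < 1) (φ : ℝ → ℝ) :
    ∫ u in Set.Ioo (0:ℝ) 1, φ u * bfryDensity α u = (1 / ((1 - α) * Real.pi)) * ∫ t, φ (bfs t) * bfr α t := by
  rw [← bfs_image, integral_image_eq_integral_abs_deriv_smul MeasurableSet.univ
    (fun t _ => (bfs_deriv t).hasDerivWithinAt) bfs_inj.injOn, setIntegral_univ, ← integral_const_mul]
  congr 1; ext t
  rw [abs_of_pos (by positivity), smul_eq_mul]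
  linear_combination φ (bfs t) * bf_dens α h0 h1 t

lemma bf_nonneg (α : ℝ) (h0 : 0 < α) (h1 : α < 1) (u : ℝ) (hu : u ∈ Set.Ioo (0:ℝ) 1) :
    0 ≤ bfryDensity α u := by
  rw [← bfs_image] at hu
  obtain ⟨t, -, rfl⟩ := hu
  have h := bf_dens α h0 h1 t
  have hr := bfr_pos α h0 h1 t
  have h1a : 0 < 1 - α := by linarith
  have hpi := Real.pi_pos
  have : 0 < (Real.exp t / (1 + Real.exp t) ^ 2) * bfryDensity α (bfs t) := by rw [h]; positivity
  exact (pos_of_mul_pos_right this (by positivity)).le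

noncomputable def bfD (α s : ℝ) : ℝ := α * (s ^ (α - 1) - (1 + s) ^ (α - 1)) / ((1 + s) ^ α - s ^ α)

lemma bf_stieltjes (α : ℝ) (h0 : 0 < α) (h1 : α < 1) (s : ℝ) (hs : 0 < s) :
    Integrable (fun t => bfr α t / (bfs t + s)) ∧ ∫ t, bfr α t / (bfs t + s) = Real.pi * bfD α s := by
  have hs1 : 0 < 1 + s := by linarith
  have hmu : 0 < s / (1 + s) := by positivity
  have hmu1 : s / (1 + s) < 1 := by rw [div_lt_one hs1]; linarith
  obtain ⟨i1, e1⟩ := bfr_int α h0 h1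
  obtain ⟨i2, e2⟩ := bfr_int2 α h0 h1 (Real.log (s / (1 + s))) (Real.log_neg hmu hmu1).ne
  have hfe : (fun t => bfr α t / (bfs t + s)) = fun t => (1 / (1 + s)) * bfr α t + (1 / (1 + s) ^ 2) * (bfr α t / (Real.exp t + Real.exp (Real.log (s / (1 + s))))) := by
    ext t
    rw [Real.exp_log hmu]
    unfold bfs
    have hx := Real.exp_pos t
    generalize Real.exp t = x at *
    have a1 : x / (1 + x) + s = (x + s + s * x) / (1 + x) := by field_simp; ring
    have a2 : x + s / (1 + s) = (x + s + s * x) / (1 + s) := by field_simp; ring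
    rw [a1, a2]
    have : 0 < x + s + s * x := by positivity
    field_simp
    ring
  refine ⟨?_, ?_⟩
  · rw [hfe]; exact (i1.const_mul _).add (i2.const_mul _)
  · rw [hfe, integral_add (i1.const_mul _) (i2.const_mul _), integral_const_mul, integral_const_mul, e1, e2, Real.exp_log hmu, mul_comm α (Real.log _), Real.exp_mul, Real.exp_log hmu, Real.div_rpow hs.le hs1.le]
    unfold bfD
    rw [Real.rpow_sub_one hs.ne', Real.rpow_sub_one hs1.ne']
    have hlt : s ^ α < (1 + s) ^ α := Real.rpow_lt_rpow hs.le (by linarith) h0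
    have hP : 0 < (1 + s) ^ α := by positivity
    generalize s ^ α = X at *
    generalize (1 + s) ^ α = P at *
    have d1 : s / (1 + s) - 1 = -(1 / (1 + s)) := by field_simp; ring
    have d2 : X / P - 1 = -((P - X) / P) := by field_simp; ring
    rw [d1, d2]
    have : P - X ≠ 0 := by intro h; linarith
    generalize hZ : P - X = Z at *
    have : X = P - Z := by linarith
    subst this
    field_simp
    ring

lemma bf_lapl (α : ℝ) (h0 : 0 < α) (h1 : α < 1) (l : ℝ) (hl : 0 ≤ l) :
    ∫ t, Real.log (1 + l / bfs t) * bfr α t = Real.pi * (-Real.log ((1 + l) ^ α - l ^ α)) := by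
  have hpi := Real.pi_pos
  have hpos : ∀ s : ℝ, 0 ≤ s → 0 < (1 + s) ^ α - s ^ α := fun s hs =>
    sub_pos.2 (Real.rpow_lt_rpow hs (by linarith) h0)
  have hDnn : ∀ s : ℝ, 0 < s → 0 ≤ bfD α s := by
    intro s hs
    unfold bfD
    refine div_nonneg (mul_nonneg h0.le (sub_nonneg.2 ?_)) (hpos s hs.le).le
    exact Real.rpow_le_rpow_of_nonpos hs (by linarith) (by linarith)
  have hder : ∀ s ∈ Set.Ioo 0 l, HasDerivAt (fun s : ℝ => -Real.log ((1 + s) ^ α - s ^ α)) (bfD α s) s := by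
    intro s hs
    have hs0 := hs.1
    have a := ((hasDerivAt_id s).const_add 1).rpow_const (p := α) (Or.inl (by simp; linarith))
    have b := (hasDerivAt_id s).rpow_const (p := α) (Or.inl (by simp; linarith))
    have c := ((a.sub b).log (hpos s hs0.le).ne').neg
    refine c.congr_deriv ?_
    unfold bfD
    simp only [id]
    simp only [Pi.sub_apply]
    rw [← neg_div]
    congr 1; ring
  have hcont : ContinuousOn (fun s : ℝ => -Real.log ((1 + s) ^ α - s ^ α)) (Set.Icc 0 l) := by
    refine (ContinuousOn.log ?_ (fun s hs => (hpos s hs.1).ne')).neg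
    exact (((continuous_const.add continuous_id).rpow_const (fun _ => Or.inr h0.le)).sub
      (continuous_id.rpow_const (fun _ => Or.inr h0.le))).continuousOn
  have hDint : IntegrableOn (bfD α) (Set.Ioc 0 l) :=
    intervalIntegral.integrableOn_deriv_of_nonneg hcont hder (fun s hs => hDnn s hs.1)
  have hDval : ∫ s in Set.Ioc 0 l, bfD α s = -Real.log ((1 + l) ^ α - l ^ α) := by
    rw [← intervalIntegral.integral_of_le hl, intervalIntegral.integral_eq_sub_of_hasDerivAt_of_le hl hcont hder
      ((intervalIntegrable_iff_integrableOn_Ioc_of_le hl).2 hDint)]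
    simp [Real.zero_rpow h0.ne']
  have hDge : 0 ≤ -Real.log ((1 + l) ^ α - l ^ α) := by
    rw [← hDval]
    exact setIntegral_nonneg measurableSet_Ioc (fun s hs => hDnn s hs.1)
  have hrc := bfr_cont α h0 h1
  have hsc := bfs_cont
  rw [integral_eq_lintegral_of_nonneg_ae]
  rotate_left
  · refine Filter.Eventually.of_forall fun t => ?_
    have := bfs_pos t
    have hr := (bfr_pos α h0 h1 t).le
    exact mul_nonneg (Real.log_nonneg (by have : 0 ≤ l / bfs t := by positivity
                                          linarith)) hr
  · refine Measurable.aestronglyMeasurable ?_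
    have := hsc.measurable
    have := hrc.measurable
    fun_prop
  have hinner : ∀ t, ENNReal.ofReal (Real.log (1 + l / bfs t) * bfr α t) =
      ∫⁻ s in Set.Ioc 0 l, ENNReal.ofReal (bfr α t / (bfs t + s)) := by
    intro t
    have hb := bfs_pos t
    have hr := (bfr_pos α h0 h1 t).le
    have hc : ContinuousOn (fun s => bfr α t / (bfs t + s)) (Set.Icc 0 l) :=
      continuousOn_const.div (by fun_prop) (fun s hs => by have := hs.1; positivity)
    have hi : IntegrableOn (fun s => bfr α t / (bfs t + s)) (Set.Ioc 0 l) :=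
      hc.integrableOn_Icc.mono_set Set.Ioc_subset_Icc_self
    rw [← ofReal_integral_eq_lintegral_ofReal hi]
    · congr 1
      rw [← intervalIntegral.integral_of_le hl,
        intervalIntegral.integral_eq_sub_of_hasDerivAt (f := fun s => bfr α t * Real.log (bfs t + s))]
      · have : 1 + l / bfs t = (bfs t + l) / bfs t := by field_simp
        rw [this, Real.log_div (by positivity) hb.ne']
        simp; ring
      · intro s hs
        rw [Set.uIcc_of_le hl] at hs
        have := hs.1
        have := (((hasDerivAt_id s).const_add (bfs t)).log (by simp; positivity)).const_mul (bfr α t)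
        refine this.congr_deriv ?_
        simp [div_eq_mul_inv]
      · exact (intervalIntegrable_iff_integrableOn_Ioc_of_le hl).2 hi
    · refine (ae_restrict_iff' measurableSet_Ioc).2 (Filter.Eventually.of_forall fun s hs => ?_)
      have := hs.1
      change 0 ≤ bfr α t / (bfs t + s)
      positivity
  have houter : ∀ s ∈ Set.Ioc 0 l, ∫⁻ t, ENNReal.ofReal (bfr α t / (bfs t + s)) = ENNReal.ofReal (Real.pi * bfD α s) := by
    intro s hs
    obtain ⟨i, e⟩ := bf_stieltjes α h0 h1 s hs.1
    rw [← ofReal_integral_eq_lintegral_ofReal i, e]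
    refine Filter.Eventually.of_forall fun t => ?_
    have := hs.1
    have hb := bfs_pos t
    have hr := (bfr_pos α h0 h1 t).le
    change 0 ≤ bfr α t / (bfs t + s)
    positivity
  simp_rw [hinner]
  rw [lintegral_lintegral_swap, setLIntegral_congr_fun measurableSet_Ioc houter,
    ← ofReal_integral_eq_lintegral_ofReal (hDint.const_mul _), integral_const_mul, hDval,
    ENNReal.toReal_ofReal (by positivity)]
  · refine (ae_restrict_iff' measurableSet_Ioc).2 (Filter.Eventually.of_forall fun s hs => ?_)
    exact mul_nonneg hpi.le (hDnn s hs.1)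
  · refine Measurable.aemeasurable ?_
    have := hsc.measurable
    have := hrc.measurable
    unfold Function.uncurry
    fun_prop

theorem bfry_laplace_exponent
    (α : ℝ) (hα0 : 0 < α) (hα1 : α < 1) :
    (∀ u ∈ Set.Ioo (0:ℝ) 1, 0 ≤ bfryDensity α u) ∧
    (∫ u in Set.Ioo (0:ℝ) 1, bfryDensity α u = 1) ∧
    (∀ l : ℝ, 0 ≤ l →
      Real.exp (-((1 - α) * ∫ u in Set.Ioo (0:ℝ) 1, Real.log (1 + l / u) * bfryDensity α u))
        = (1 + l) ^ α - l ^ α) := by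
  have h1a : 0 < 1 - α := by linarith
  have hpi := Real.pi_pos
  refine ⟨bf_nonneg α hα0 hα1, ?_, fun l hl => ?_⟩
  · have := bf_cov α hα0 hα1 (fun _ => 1)
    simp only [one_mul] at this
    rw [this, (bfr_int α hα0 hα1).2]
    field_simp
  · rw [bf_cov α hα0 hα1 (fun u => Real.log (1 + l / u)), bf_lapl α hα0 hα1 l hl]
    have : -((1 - α) * (1 / ((1 - α) * Real.pi) * (Real.pi * -Real.log ((1 + l) ^ α - l ^ α)))) =
        Real.log ((1 + l) ^ α - l ^ α) := by field_simp
    rw [this, Real.exp_log (sub_pos.2 (Real.rpow_lt_rpow hl (by linarith) hα0))]
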